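/- (Thickening bijection.) Let d be even and m ≥ 1. Then the number of m-partite (with respect to intervals of length d) noncrossing pair partitions of [md] equals the number of noncrossing partitions of [md/2] that contain no singleton blocks and are m-partite with respect to the intervals of length d/2 (i.e. every block has at least two elements and contains at most one element from each interval {k(d/2)+1, ..., (k+1)(d/2)}, k = 0, ..., m−1). -/

import Mathlib

/-!
The bijection doubles every element `i` to the points `2 * i` and `2 * i + 1` and joins `2 * i + 1`
to `2 * j`, where `j` is the cyclic successor of `i` in its block. Equivalently, a point touches an
element and a gap between elements, and two points are joined if their elements share a block and
their gaps share a region of the arc diagram. In this form the thickening is an intersection of two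
noncrossing relations. Two points of equal parity are never joined, because the arc between their
elements separates their gaps, so the blocks are pairs.

Conversely, the midpoints between the two copies of each element, grouped by the regions of a
noncrossing pair partition, recover the original partition. That thickening undoes this step rests
on the fact that paired points have opposite parity.

A pair inside a doubled interval comes either from a singleton block or from two consecutive
elements of a block in one interval, which exist as soon as a block meets an interval twice.
-/

/-- `i` and `j` lie in the same block of the partition `π`. -/
def SameBlock {n : ℕ} (π : Finpartition (Finset.univ : Finset (Fin n))) (i j : Fin n) : Prop :=
  ∃ B ∈ π.parts, i ∈ B ∧ j ∈ B

/-- A partition of `{1, ..., n}` is noncrossing if there are no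
`i < i' < j < j'` with `i ~ j`, `i' ~ j'` and `i ≁ i'`. -/
def IsNoncrossing {n : ℕ} (π : Finpartition (Finset.univ : Finset (Fin n))) : Prop :=
  ∀ i i' j j' : Fin n, i < i' → i' < j → j < j' →
    SameBlock π i j → SameBlock π i' j' → SameBlock π i i'

/-- A pair partition: every block has exactly two elements. -/
def IsPairPartition {n : ℕ} (π : Finpartition (Finset.univ : Finset (Fin n))) : Prop :=
  ∀ B ∈ π.parts, B.card = 2

/-- An `m`-partite partition (with respect to the consecutive intervals of length `d`):
every block contains at most one element from each interval
`{kd+1, ..., (k+1)d}` (0-indexed: the elements `i` with `i / d = k`). -/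
def IsMPartite {n : ℕ} (d : ℕ) (π : Finpartition (Finset.univ : Finset (Fin n))) : Prop :=
  ∀ B ∈ π.parts, ∀ k : ℕ, (B.filter (fun i : Fin n => (i : ℕ) / d = k)).card ≤ 1


open Finset

section Blocks

variable {n : ℕ} {π ρ : Finpartition (univ : Finset (Fin n))} {i j k : Fin n}

theorem sameBlock_iff_mem_part : SameBlock π i j ↔ j ∈ π.part i := by
  simp only [Finpartition.mem_part_iff_exists, SameBlock, and_comm]

theorem sameBlock_iff_part_eq_part : SameBlock π i j ↔ π.part i = π.part j := by
  rw [sameBlock_iff_mem_part, π.mem_part_iff_part_eq_part (mem_univ j) (mem_univ i), eq_comm]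

theorem SameBlock.refl (π : Finpartition (univ : Finset (Fin n))) (i : Fin n) : SameBlock π i i :=
  sameBlock_iff_part_eq_part.2 rfl

theorem SameBlock.symm (h : SameBlock π i j) : SameBlock π j i :=
  sameBlock_iff_part_eq_part.2 (sameBlock_iff_part_eq_part.1 h).symm

theorem SameBlock.trans (hij : SameBlock π i j) (hjk : SameBlock π j k) : SameBlock π i k :=
  sameBlock_iff_part_eq_part.2
    ((sameBlock_iff_part_eq_part.1 hij).trans (sameBlock_iff_part_eq_part.1 hjk))

/-- The equivalence relation on `Fin n` whose classes are the blocks of `π`. -/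
def blockSetoid (π : Finpartition (univ : Finset (Fin n))) : Setoid (Fin n) where
  r := SameBlock π
  iseqv := ⟨SameBlock.refl π, SameBlock.symm, SameBlock.trans⟩

open Classical in
theorem sameBlock_ofSetoid {s : Setoid (Fin n)} :
    SameBlock (Finpartition.ofSetoid s) i j ↔ s i j := by
  rw [sameBlock_iff_mem_part, Finpartition.mem_part_ofSetoid_iff_rel]

theorem forall_mem_parts_iff_forall_part {P : Finset (Fin n) → Prop} :
    (∀ B ∈ π.parts, P B) ↔ ∀ i, P (π.part i) := by
  refine ⟨fun h i => h _ (π.part_mem.2 (mem_univ i)), fun h B hB => ?_⟩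
  obtain ⟨i, -, rfl⟩ := π.part_surjOn hB
  exact h i

theorem eq_of_part_eq_part (h : ∀ i, π.part i = ρ.part i) : π = ρ := by
  ext B
  constructor <;> intro hB
  · obtain ⟨i, -, rfl⟩ := π.part_surjOn hB
    exact h i ▸ ρ.part_mem.2 (mem_univ i)
  · obtain ⟨i, -, rfl⟩ := ρ.part_surjOn hB
    exact h i ▸ π.part_mem.2 (mem_univ i)

theorem eq_of_sameBlock_iff (h : ∀ i j, SameBlock π i j ↔ SameBlock ρ i j) : π = ρ :=
  eq_of_part_eq_part fun i => Finset.ext fun j => by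
    rw [← sameBlock_iff_mem_part, h, sameBlock_iff_mem_part]

theorem two_le_card_parts_iff :
    (∀ B ∈ π.parts, 2 ≤ #B) ↔ ∀ i, ∃ j ≠ i, SameBlock π i j := by
  rw [forall_mem_parts_iff_forall_part]
  refine forall_congr' fun i => ⟨fun h => ?_, fun ⟨j, hji, hij⟩ => ?_⟩
  · obtain ⟨j, hj, hji⟩ := exists_mem_ne h i
    exact ⟨j, hji, sameBlock_iff_mem_part.2 hj⟩
  · exact one_lt_card.2 ⟨j, sameBlock_iff_mem_part.1 hij, i, π.mem_part (mem_univ i), hji⟩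

theorem injOn_parts_iff {κ : Type*} {f : Fin n → κ} :
    (∀ B ∈ π.parts, Set.InjOn f B) ↔ ∀ i j, SameBlock π i j → f i = f j → i = j :=
  ⟨fun h _ _ ⟨B, hB, hi, hj⟩ hf => h B hB hi hj hf,
    fun h B hB i hi j hj hf => h i j ⟨B, hB, hi, hj⟩ hf⟩

theorem isMPartite_iff_injOn {d : ℕ} :
    IsMPartite d π ↔ ∀ B ∈ π.parts, Set.InjOn (fun i : Fin n => (i : ℕ) / d) B := by
  refine forall₂_congr fun B _ => ?_
  simp only [card_le_one, mem_filter]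
  exact ⟨fun h i hi j hj hij => h _ i ⟨hi, hij⟩ j ⟨hj, rfl⟩,
    fun h k i hi j hj => h hi.1 hj.1 (hi.2.trans hj.2.symm)⟩

end Blocks

section PairPartition

variable {n : ℕ} {π ρ : Finpartition (univ : Finset (Fin n))} {i j k : Fin n}

theorem IsPairPartition.card_part (hπ : IsPairPartition π) (i : Fin n) : #(π.part i) = 2 :=
  hπ _ (π.part_mem.2 (mem_univ i))

theorem IsPairPartition.sameBlock_iff (hπ : IsPairPartition π) (hij : SameBlock π i j)
    (hne : i ≠ j) : SameBlock π i k ↔ k = i ∨ k = j := by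
  have hsub : {i, j} ⊆ π.part i := by
    simp [insert_subset_iff, sameBlock_iff_mem_part.1 hij]
  have hpart : {i, j} = π.part i :=
    eq_of_subset_of_card_le hsub (by rw [hπ.card_part, card_pair hne])
  rw [sameBlock_iff_mem_part, ← hpart, mem_insert, mem_singleton]

theorem IsPairPartition.eq_of_sameBlock_imp (hπ : IsPairPartition π) (hρ : IsPairPartition ρ)
    (h : ∀ i j, SameBlock π i j → SameBlock ρ i j) : π = ρ :=
  eq_of_part_eq_part fun i => eq_of_subset_of_card_le
    (fun j hj => sameBlock_iff_mem_part.1 (h i j (sameBlock_iff_mem_part.2 hj)))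
    (by rw [hπ.card_part, hρ.card_part])

end PairPartition

section Noncrossing

/-- An equivalence relation on a preorder is noncrossing if related pairs `a ∼ c` and `b ∼ d` with
`a ≤ b ≤ c ≤ d` have `a ∼ b`. When two of the points coincide this holds for every equivalence
relation, so the weak inequalities agree with the strict ones of `IsNoncrossing`. -/
def IsNoncrossingSetoid {α : Type*} [Preorder α] (s : Setoid α) : Prop :=
  ∀ ⦃a b c d : α⦄, a ≤ b → b ≤ c → c ≤ d → s a c → s b d → s a b

theorem IsNoncrossingSetoid.comap {α β : Type*} [Preorder α] [Preorder β] {s : Setoid β}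
    (hs : IsNoncrossingSetoid s) {f : α → β} (hf : Monotone f) :
    IsNoncrossingSetoid (s.comap f) :=
  fun _ _ _ _ hab hbc hcd => hs (hf hab) (hf hbc) (hf hcd)

theorem IsNoncrossingSetoid.inf {α : Type*} [Preorder α] {s t : Setoid α}
    (hs : IsNoncrossingSetoid s) (ht : IsNoncrossingSetoid t) : IsNoncrossingSetoid (s ⊓ t) :=
  fun _ _ _ _ hab hbc hcd hac hbd =>
    ⟨hs hab hbc hcd hac.1 hbd.1, ht hab hbc hcd hac.2 hbd.2⟩

variable {n : ℕ} {π : Finpartition (univ : Finset (Fin n))} {i j k l : Fin n}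

open Classical in
theorem IsNoncrossingSetoid.isNoncrossing_ofSetoid {s : Setoid (Fin n)}
    (hs : IsNoncrossingSetoid s) : IsNoncrossing (Finpartition.ofSetoid s) := by
  intro i i' j j' hii' hi'j hjj' hij hi'j'
  rw [sameBlock_ofSetoid] at *
  exact hs hii'.le hi'j.le hjj'.le hij hi'j'

theorem IsNoncrossing.isNoncrossingSetoid (hπ : IsNoncrossing π) :
    IsNoncrossingSetoid (blockSetoid π) := by
  intro i i' j j' hii' hi'j hjj' hij hi'j'
  rcases hii'.eq_or_lt with rfl | hii'
  · exact SameBlock.refl π i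
  rcases hi'j.eq_or_lt with rfl | hi'j
  · exact hij
  rcases hjj'.eq_or_lt with rfl | hjj'
  · exact hij.trans hi'j'.symm
  exact hπ i i' j j' hii' hi'j hjj' hij hi'j'

theorem IsNoncrossing.mem_Ioo_of_sameBlock (hπ : IsNoncrossing π) (hij : SameBlock π i j)
    (hk : k ∈ Ioo i j) (hik : ¬ SameBlock π i k) (hkl : SameBlock π k l) : l ∈ Ioo i j := by
  rw [mem_Ioo] at hk ⊢
  by_contra hl
  rcases le_or_gt l i with hli | hil
  · exact hik ((hπ.isNoncrossingSetoid hli hk.1.le hk.2.le hkl.symm hij).symm.trans hkl.symm)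
  · have hjl : j ≤ l := not_lt.1 fun hlj => hl ⟨hil, hlj⟩
    exact hik (hπ.isNoncrossingSetoid hk.1.le hk.2.le hjl hij hkl)

/-- The points strictly between `i` and `j` form a union of blocks, so their number is even. -/
theorem IsNoncrossing.mod_two_ne_of_sameBlock (hπ : IsNoncrossing π) (hpair : IsPairPartition π)
    (hij : SameBlock π i j) (hlt : i < j) : (i : ℕ) % 2 ≠ (j : ℕ) % 2 := by
  have hinter : ∀ B ∈ π.parts, 2 ∣ #(B ∩ Ioo i j) := by
    intro B hB
    obtain hempty | ⟨k, hk⟩ := (B ∩ Ioo i j).eq_empty_or_nonempty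
    · simp [hempty]
    obtain ⟨hkB, hk⟩ := mem_inter.1 hk
    have hik : ¬ SameBlock π i k := by
      rw [hpair.sameBlock_iff hij hlt.ne]
      rintro (rfl | rfl) <;> simp at hk
    have hsub : B ⊆ Ioo i j := fun l hl => hπ.mem_Ioo_of_sameBlock hij hk hik ⟨B, hB, hkB, hl⟩
    rw [inter_eq_left.2 hsub, hpair B hB]
  have hcard : ∑ B ∈ π.parts, #(B ∩ Ioo i j) = #(Ioo i j) := by
    rw [← (π.restrict (subset_univ (Ioo i j))).sum_card_parts]
    exact (π.sum_restrict _ card card_empty).symm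
  have heven : 2 ∣ (j : ℕ) - i - 1 := by
    rw [← Fin.card_Ioo, ← hcard]
    exact dvd_sum hinter
  omega

end Noncrossing

section Region

variable {n : ℕ} {π : Finpartition (univ : Finset (Fin n))} {i j : Fin n}

/-- Two gaps are related if they lie in the same region of the arc diagram of `π`, that is, if the
same arcs, drawn between any two elements of a block, pass over them. The gap `g` is the one just
before the element `g`. On the gaps `1, ..., n` this is the Kreweras complement of `π`. -/
def regionSetoid (π : Finpartition (univ : Finset (Fin n))) : Setoid ℕ where
  r g h := ∀ x y : Fin n, SameBlock π x y → ((x < g ∧ g ≤ y) ↔ (x < h ∧ h ≤ y))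
  iseqv :=
    { refl := fun _ _ _ _ => Iff.rfl
      symm := fun h x y hxy => (h x y hxy).symm
      trans := fun h h' x y hxy => (h x y hxy).trans (h' x y hxy) }

theorem isNoncrossingSetoid_regionSetoid (π : Finpartition (univ : Finset (Fin n))) :
    IsNoncrossingSetoid (regionSetoid π) := by
  intro a b c d hab hbc hcd hac hbd x y hxy
  have := hac x y hxy
  have := hbd x y hxy
  omega

theorem IsNoncrossing.regionSetoid_of_isLeast (hπ : IsNoncrossing π)
    (hj : IsLeast {k | SameBlock π i k ∧ i < k} j) : regionSetoid π (i + 1) j := by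
  obtain ⟨⟨hij, hlt⟩, hleast⟩ := hj
  intro x y hxy
  constructor
  · rintro ⟨hx, hy⟩
    refine ⟨by omega, not_lt.1 fun hyj => ?_⟩
    have hxi : SameBlock π x i := hπ.isNoncrossingSetoid (c := y) (d := j)
      (by omega) (by omega) (by omega) hxy hij
    exact hyj.not_ge (hleast ⟨hxi.symm.trans hxy, by omega⟩)
  · rintro ⟨hx, hy⟩
    refine ⟨?_, by omega⟩
    by_contra! hix
    have hix' : SameBlock π i x := hπ.isNoncrossingSetoid (c := j) (d := y)
      (by omega) (by omega) (by omega) hij hxy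
    exact absurd (hleast ⟨hix', by omega⟩) (by omega)

theorem IsNoncrossing.regionSetoid_of_isGreatest_of_isLeast (hπ : IsNoncrossing π)
    (hi : IsGreatest {k | SameBlock π i k} i) (hj : IsLeast {k | SameBlock π i k} j) :
    regionSetoid π (i + 1) j := by
  have hij : SameBlock π i j := hj.1
  have hji : j ≤ i := hi.2 hij
  intro x y hxy
  constructor
  · rintro ⟨hx, hy⟩
    refine ⟨?_, by omega⟩
    by_contra! hjx
    have hjx' : SameBlock π j x := hπ.isNoncrossingSetoid (c := i) (d := y)
      (by omega) (by omega) (by omega) hij.symm hxy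
    exact absurd (hi.2 ((hij.trans hjx').trans hxy)) (by omega)
  · rintro ⟨hx, hy⟩
    refine ⟨by omega, not_lt.1 fun hyi => ?_⟩
    have hxj : SameBlock π x j := hπ.isNoncrossingSetoid (c := y) (d := i)
      (by omega) (by omega) (by omega) hxy hij.symm
    exact absurd (hj.2 (hij.trans hxj.symm)) (by omega)

/-- The witness is the successor of `i` in the cyclic order of its block. -/
theorem IsNoncrossing.exists_regionSetoid_succ (hπ : IsNoncrossing π) (i : Fin n) :
    ∃ j, SameBlock π i j ∧ regionSetoid π (i + 1) j := by
  by_cases hlt : ∃ k, SameBlock π i k ∧ i < k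
  · obtain ⟨j, hj, hleast⟩ := Set.exists_min_image {k | SameBlock π i k ∧ i < k} id
      (Set.toFinite _) hlt
    exact ⟨j, hj.1, hπ.regionSetoid_of_isLeast ⟨hj, fun k hk => hleast k hk⟩⟩
  · obtain ⟨j, hj, hleast⟩ := Set.exists_min_image {k | SameBlock π i k} id
      (Set.toFinite _) ⟨i, SameBlock.refl π i⟩
    refine ⟨j, hj, hπ.regionSetoid_of_isGreatest_of_isLeast ⟨SameBlock.refl π i, ?_⟩
      ⟨hj, fun k hk => hleast k hk⟩⟩
    exact fun k hk => not_lt.1 fun hik => hlt ⟨k, hk, hik⟩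

theorem IsNoncrossing.regionSetoid_inner (hπ : IsNoncrossing π) (hpair : IsPairPartition π)
    (hij : SameBlock π i j) (hlt : i < j) : regionSetoid π (i + 1) j := by
  refine hπ.regionSetoid_of_isLeast ⟨⟨hij, hlt⟩, fun k ⟨hik, hk⟩ => ?_⟩
  exact (((hpair.sameBlock_iff hij hlt.ne).1 hik).resolve_left hk.ne').ge

theorem IsNoncrossing.regionSetoid_outer (hπ : IsNoncrossing π) (hpair : IsPairPartition π)
    (hij : SameBlock π i j) (hlt : i < j) : regionSetoid π (j + 1) i := by
  have hblock (k : Fin n) (hk : SameBlock π j k) : k = j ∨ k = i :=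
    (hpair.sameBlock_iff hij.symm hlt.ne').1 hk
  refine hπ.regionSetoid_of_isGreatest_of_isLeast
    ⟨SameBlock.refl π j, fun k hk => ?_⟩ ⟨hij.symm, fun k hk => ?_⟩ <;>
  rcases hblock k hk with rfl | rfl
  exacts [le_rfl, hlt.le, hlt.le, le_rfl]

end Region

section Thickening

variable {n : ℕ} {π : Finpartition (univ : Finset (Fin n))} {i j : Fin n} {p q : Fin (n * 2)}

open Classical in
/-- The thickening of `π`. The point `p` is one of the two copies `2 * i` and `2 * i + 1` of the
element `i = p / 2`, and it is adjacent to the gap `(p + 1) / 2`; two points are related if their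
elements share a block and their gaps share a region. -/
noncomputable def thick (π : Finpartition (univ : Finset (Fin n))) :
    Finpartition (univ : Finset (Fin (n * 2))) :=
  Finpartition.ofSetoid ((blockSetoid π).comap Fin.divNat ⊓
    (regionSetoid π).comap fun p : Fin (n * 2) => ((p : ℕ) + 1) / 2)

theorem sameBlock_thick : SameBlock (thick π) p q ↔
    SameBlock π p.divNat q.divNat ∧ regionSetoid π ((p + 1) / 2) ((q + 1) / 2) :=
  sameBlock_ofSetoid

theorem sameBlock_thick_mkDivMod :
    SameBlock (thick π) (Fin.mkDivMod i 1) (Fin.mkDivMod j 0) ↔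
      SameBlock π i j ∧ regionSetoid π (i + 1) j := by
  have hi : (2 * (i : ℕ) + 1 + 1) / 2 = i + 1 := by omega
  have hj : (2 * (j : ℕ) + 1) / 2 = j := by omega
  simp [sameBlock_thick, hi, hj]

theorem monotone_divNat {m : ℕ} : Monotone (Fin.divNat : Fin (n * m) → Fin n) :=
  fun _ _ hpq => Nat.div_le_div_right hpq

theorem IsNoncrossing.isNoncrossing_thick (hπ : IsNoncrossing π) : IsNoncrossing (thick π) := by
  have hgap : Monotone fun p : Fin (n * 2) => ((p : ℕ) + 1) / 2 :=
    fun _ _ hpq => Nat.div_le_div_right (Nat.succ_le_succ hpq)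
  exact ((hπ.isNoncrossingSetoid.comap monotone_divNat).inf
    ((isNoncrossingSetoid_regionSetoid π).comap hgap)).isNoncrossing_ofSetoid

theorem eq_of_sameBlock_thick_of_modNat_eq (hpq : SameBlock (thick π) p q)
    (hmod : p.modNat = q.modNat) : p = q := by
  obtain ⟨hblock, hregion⟩ := sameBlock_thick.1 hpq
  have := hregion _ _ hblock
  have := hregion _ _ hblock.symm
  have hmod : (p : ℕ) % 2 = q % 2 := congrArg Fin.val hmod
  simp only [Fin.coe_divNat] at *
  omega

theorem IsNoncrossing.exists_sameBlock_thick_mkDivMod (hπ : IsNoncrossing π) (i : Fin n) :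
    ∃ j, SameBlock (thick π) (Fin.mkDivMod i 1) (Fin.mkDivMod j 0) :=
  (hπ.exists_regionSetoid_succ i).imp fun _ => sameBlock_thick_mkDivMod.2

/-- The pairing of odd points with even ones is injective, hence surjective, so even points are
paired too. -/
theorem IsNoncrossing.exists_ne_sameBlock_thick (hπ : IsNoncrossing π) (p : Fin (n * 2)) :
    ∃ q ≠ p, SameBlock (thick π) p q := by
  choose σ hσ using hπ.exists_sameBlock_thick_mkDivMod
  have hinj : Function.Injective σ := by
    intro i i' hii'
    have hblock : SameBlock (thick π) (Fin.mkDivMod i 1) (Fin.mkDivMod i' 1) :=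
      (hσ i).trans (hii' ▸ (hσ i').symm)
    simpa using congrArg Fin.divNat (eq_of_sameBlock_thick_of_modNat_eq hblock (by simp))
  have hne (i j : Fin n) : Fin.mkDivMod i (1 : Fin 2) ≠ Fin.mkDivMod j 0 := fun h => by
    simpa using congrArg Fin.modNat h
  obtain ⟨i, r, rfl⟩ : ∃ i r, Fin.mkDivMod i r = p := ⟨_, _, Fin.divNat_mkDivMod_modNat p⟩
  obtain rfl | rfl : r = 0 ∨ r = 1 := by omega
  · obtain ⟨i, rfl⟩ := Finite.surjective_of_injective hinj i
    exact ⟨Fin.mkDivMod i 1, hne i _, (hσ i).symm⟩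
  · exact ⟨Fin.mkDivMod (σ i) 0, (hne _ _).symm, hσ i⟩

theorem IsNoncrossing.isPairPartition_thick (hπ : IsNoncrossing π) :
    IsPairPartition (thick π) := by
  intro B hB
  refine le_antisymm ?_ (two_le_card_parts_iff.2 hπ.exists_ne_sameBlock_thick B hB)
  calc #B ≤ #(univ : Finset (Fin 2)) :=
        card_le_card_of_injOn Fin.modNat (fun _ _ => mem_univ _) fun p hp q hq =>
          eq_of_sameBlock_thick_of_modNat_eq ⟨B, hB, hp, hq⟩
    _ = 2 := card_fin 2

theorem IsNoncrossing.two_le_card_parts_of_injOn_thick {κ : Type*} {f : Fin n → κ}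
    (hπ : IsNoncrossing π)
    (hinj : ∀ B ∈ (thick π).parts, Set.InjOn (fun p : Fin (n * 2) => f p.divNat) B) :
    ∀ B ∈ π.parts, 2 ≤ #B := by
  refine two_le_card_parts_iff.2 fun i => ?_
  obtain ⟨j, hpair⟩ := hπ.exists_sameBlock_thick_mkDivMod i
  refine ⟨j, ?_, (sameBlock_thick_mkDivMod.1 hpair).1⟩
  rintro rfl
  simpa using congrArg Fin.modNat (injOn_parts_iff.1 hinj _ _ hpair (by simp))

/-- A block meeting a fiber of `f` twice does so in two consecutive elements, because the fiber is
convex. -/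
theorem IsNoncrossing.injOn_of_injOn_thick {κ : Type*} [PartialOrder κ] {f : Fin n → κ}
    (hπ : IsNoncrossing π) (hf : Monotone f)
    (hinj : ∀ B ∈ (thick π).parts, Set.InjOn (fun p : Fin (n * 2) => f p.divNat) B) :
    ∀ B ∈ π.parts, Set.InjOn f B := by
  have hlt (i j : Fin n) (hij : SameBlock π i j) (hlt : i < j) : f i ≠ f j := by
    intro hfij
    obtain ⟨k, hpair⟩ := hπ.exists_sameBlock_thick_mkDivMod i
    obtain ⟨hik, hkj⟩ : i < k ∧ k ≤ j :=
      ((sameBlock_thick_mkDivMod.1 hpair).2 i j hij).1 ⟨by omega, by omega⟩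
    have hfik : f i = f k := le_antisymm (hf hik.le) (hfij ▸ hf hkj)
    simpa using congrArg Fin.modNat (injOn_parts_iff.1 hinj _ _ hpair (by simpa))
  refine injOn_parts_iff.2 fun i j hij hfij => ?_
  rcases lt_trichotomy i j with h | h | h
  exacts [absurd hfij (hlt i j hij h), h, absurd hfij.symm (hlt j i hij.symm h)]

/-- The two copies of an element are separated by the arcs from that element to its block. -/
theorem injOn_thick_of_injOn {κ : Type*} {f : Fin n → κ} (hcard : ∀ B ∈ π.parts, 2 ≤ #B)
    (hinj : ∀ B ∈ π.parts, Set.InjOn f B) :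
    ∀ B ∈ (thick π).parts, Set.InjOn (fun p : Fin (n * 2) => f p.divNat) B := by
  refine injOn_parts_iff.2 fun p q hpq hfpq => ?_
  obtain ⟨hblock, hregion⟩ := sameBlock_thick.1 hpq
  have hdiv : (p : ℕ) / 2 = q / 2 :=
    congrArg Fin.val (injOn_parts_iff.1 hinj _ _ hblock hfpq)
  obtain ⟨j, hne, hj⟩ := two_le_card_parts_iff.1 hcard p.divNat
  have := hregion _ _ hj
  have := hregion _ _ hj.symm
  have := Fin.val_ne_of_ne hne
  simp only [Fin.coe_divNat] at *
  omega

theorem IsNoncrossing.injOn_thick_iff {κ : Type*} [PartialOrder κ] {f : Fin n → κ}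
    (hπ : IsNoncrossing π) (hf : Monotone f) :
    (∀ B ∈ (thick π).parts, Set.InjOn (fun p : Fin (n * 2) => f p.divNat) B) ↔
      (∀ B ∈ π.parts, 2 ≤ #B) ∧ ∀ B ∈ π.parts, Set.InjOn f B :=
  ⟨fun h => ⟨hπ.two_le_card_parts_of_injOn_thick h, hπ.injOn_of_injOn_thick hf h⟩,
    fun h => injOn_thick_of_injOn h.1 h.2⟩

end Thickening

section Thinning

variable {n : ℕ} {π : Finpartition (univ : Finset (Fin n))}
  {ρ : Finpartition (univ : Finset (Fin (n * 2)))} {i j : Fin n} {p q : Fin (n * 2)}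

open Classical in
/-- The thinning of `ρ`, the inverse of the thickening: two elements are related if the gaps
between their two copies lie in the same region of `ρ`. -/
noncomputable def thin (ρ : Finpartition (univ : Finset (Fin (n * 2)))) :
    Finpartition (univ : Finset (Fin n)) :=
  Finpartition.ofSetoid ((regionSetoid ρ).comap fun i : Fin n => 2 * (i : ℕ) + 1)

theorem sameBlock_thin :
    SameBlock (thin ρ) i j ↔ regionSetoid ρ (2 * i + 1) (2 * j + 1) :=
  sameBlock_ofSetoid

theorem isNoncrossing_thin (ρ : Finpartition (univ : Finset (Fin (n * 2)))) :
    IsNoncrossing (thin ρ) := by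
  have hgap : Monotone fun i : Fin n => 2 * (i : ℕ) + 1 := fun i j (hij : (i : ℕ) ≤ j) => by
    simpa using hij
  exact ((isNoncrossingSetoid_regionSetoid ρ).comap hgap).isNoncrossing_ofSetoid

theorem IsNoncrossing.sameBlock_thick_thin_of_lt (hρ : IsNoncrossing ρ)
    (hpair : IsPairPartition ρ) (hpq : SameBlock ρ p q) (hlt : p < q) :
    SameBlock (thick (thin ρ)) p q := by
  have hparity := hρ.mod_two_ne_of_sameBlock hpair hpq hlt
  have hthin : SameBlock (thin ρ) p.divNat q.divNat := by
    rw [sameBlock_thin, Fin.coe_divNat, Fin.coe_divNat]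
    rcases Nat.mod_two_eq_zero_or_one p with hp | hp
    · convert hρ.regionSetoid_inner hpair hpq hlt using 1 <;> omega
    · convert (regionSetoid ρ).symm' (hρ.regionSetoid_outer hpair hpq hlt) using 1 <;> omega
  refine sameBlock_thick.2 ⟨hthin, fun x y hxy => ?_⟩
  have := sameBlock_thin.1 hxy p q hpq
  omega

theorem IsNoncrossing.thick_thin (hρ : IsNoncrossing ρ) (hpair : IsPairPartition ρ) :
    thick (thin ρ) = ρ := by
  refine (hpair.eq_of_sameBlock_imp (isNoncrossing_thin ρ).isPairPartition_thick ?_).symm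
  intro p q hpq
  rcases lt_trichotomy p q with h | rfl | h
  · exact hρ.sameBlock_thick_thin_of_lt hpair hpq h
  · exact SameBlock.refl _ p
  · exact (hρ.sameBlock_thick_thin_of_lt hpair hpq.symm h).symm

theorem SameBlock.thin_thick (hij : SameBlock π i j) : SameBlock (thin (thick π)) i j := by
  have hcover (i j : Fin n) (hij : SameBlock π i j) (p q : Fin (n * 2))
      (hpq : SameBlock (thick π) p q) (hi : p < 2 * (i : ℕ) + 1 ∧ 2 * (i : ℕ) + 1 ≤ q) :
      p < 2 * (j : ℕ) + 1 ∧ 2 * (j : ℕ) + 1 ≤ q := by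
    have hregion := (sameBlock_thick.1 hpq).2
    have := hregion i j hij
    have := hregion j i hij.symm
    omega
  exact sameBlock_thin.2 fun p q hpq => ⟨hcover i j hij p q hpq, hcover j i hij.symm p q hpq⟩

/-- If `i` and `j` were in different blocks, let `l` be the last element before `j` in the block of
`i`. Its cyclic successor lies after `j` or not after `i`, so the thickened arc at `l` separates `i`
from `j`. -/
theorem IsNoncrossing.sameBlock_of_thin_thick_of_lt (hπ : IsNoncrossing π) (hlt : i < j)
    (h : SameBlock (thin (thick π)) i j) : SameBlock π i j := by
  by_contra hij
  obtain ⟨l, ⟨hil, hlj⟩, hmax⟩ := Set.exists_max_image {l | SameBlock π i l ∧ l < j} id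
    (Set.toFinite _) ⟨i, SameBlock.refl π i, hlt⟩
  have hle : i ≤ l := hmax i ⟨SameBlock.refl π i, hlt⟩
  obtain ⟨k, hpair⟩ := hπ.exists_sameBlock_thick_mkDivMod l
  obtain ⟨hlk, hregion⟩ := sameBlock_thick_mkDivMod.1 hpair
  have hk : k ≤ i ∨ j < k := by
    by_contra! hc
    have hkj : k ≠ j := fun hkj => hij (hkj ▸ hil.trans hlk)
    have hkl : k ≤ l := hmax k ⟨hil.trans hlk, by omega⟩
    have := hregion i l hil
    omega
  have h₁ := sameBlock_thin.1 h _ _ hpair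
  have h₂ := sameBlock_thin.1 h _ _ hpair.symm
  simp only [Fin.coe_mkDivMod, Fin.val_zero, Fin.val_one] at h₁ h₂
  omega

theorem IsNoncrossing.thin_thick (hπ : IsNoncrossing π) : thin (thick π) = π := by
  refine eq_of_sameBlock_iff fun i j => ⟨fun h => ?_, SameBlock.thin_thick⟩
  rcases lt_trichotomy i j with hlt | rfl | hlt
  · exact hπ.sameBlock_of_thin_thick_of_lt hlt h
  · exact SameBlock.refl π i
  · exact (hπ.sameBlock_of_thin_thick_of_lt hlt h.symm).symm

end Thinning

/-- The fibers of `f` are consecutive intervals of arbitrary, possibly different, lengths. -/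
theorem thickening_bijection_general {n : ℕ} {κ : Type*} [PartialOrder κ] {f : Fin n → κ}
    (hf : Monotone f) :
    Nat.card {ρ : Finpartition (univ : Finset (Fin (n * 2))) //
        IsNoncrossing ρ ∧ IsPairPartition ρ ∧
          ∀ B ∈ ρ.parts, Set.InjOn (fun p : Fin (n * 2) => f p.divNat) B} =
      Nat.card {π : Finpartition (univ : Finset (Fin n)) //
        IsNoncrossing π ∧ (∀ B ∈ π.parts, 2 ≤ #B) ∧ ∀ B ∈ π.parts, Set.InjOn f B} :=
  Nat.card_congr
    { toFun := fun ⟨ρ, hρ, hpair, hinj⟩ => ⟨thin ρ, isNoncrossing_thin ρ,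
        ((isNoncrossing_thin ρ).injOn_thick_iff hf).1 (by rwa [hρ.thick_thin hpair])⟩
      invFun := fun ⟨π, hπ, hinj⟩ => ⟨thick π, hπ.isNoncrossing_thick, hπ.isPairPartition_thick,
        (hπ.injOn_thick_iff hf).2 hinj⟩
      left_inv := fun ⟨_, hρ, hpair, _⟩ => Subtype.ext (hρ.thick_thin hpair)
      right_inv := fun ⟨_, hπ, _⟩ => Subtype.ext hπ.thin_thick }

/-- **Thickening bijection.** For even `d` and `m ≥ 1`, the number of `m`-partite
(with respect to intervals of length `d`) noncrossing pair partitions of `{1, ..., md}`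
equals the number of noncrossing partitions of `{1, ..., md/2}` without singleton
blocks that are `m`-partite with respect to the intervals of length `d/2`. -/
theorem thickening_bijection (m d : ℕ) (hm : 1 ≤ m) (hd : Even d) :
    Nat.card {π : Finpartition (Finset.univ : Finset (Fin (m * d))) //
        IsNoncrossing π ∧ IsPairPartition π ∧ IsMPartite d π} =
      Nat.card {π : Finpartition (Finset.univ : Finset (Fin (m * (d / 2)))) //
        IsNoncrossing π ∧ (∀ B ∈ π.parts, 2 ≤ B.card) ∧ IsMPartite (d / 2) π} := by
  have hn : m * d = m * (d / 2) * 2 := by rw [mul_assoc, Nat.div_two_mul_two_of_even hd]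
  have hdiv (p : ℕ) : p / d = p / 2 / (d / 2) := by
    rw [Nat.div_div_eq_div_mul, Nat.two_mul_div_two_of_even hd]
  have hmono : Monotone fun i : Fin (m * (d / 2)) => (i : ℕ) / (d / 2) :=
    fun _ _ hij => Nat.div_le_div_right hij
  rw [hn]
  simpa only [isMPartite_iff_injOn, hdiv, Fin.coe_divNat] using thickening_bijection_general hmono
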